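/- For all natural numbers m ≥ 1, x and y, the number of triples consisting of a rooted forest F on [m], a function assigning to each non-root vertex of F an element of {1,…,x}, and a function assigning to each root of F an element of {1,…,y}, equals (m·x + y)^{m−1} · y. -/

import Mathlib

/-!
A rooted forest is the same thing as a parent map `p : V → Option V` (with `none` at the roots)
under which every vertex reaches a root. In one direction, the graph joining each vertex to its
parent is acyclic because every edge is a bridge: the descendants of its lower end are separated
from the rest by it (`toForest`). In the other, the parent of a non-root is its neighbour closer to
the root (`exists_toForest_eq`, `parent_unique`). So labelled rooted forests are counted by
labelled parent maps `V → (V × X) ⊕ Y` (`card_forest_eq`).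

Let `N(n, x, y)` be the number of these for `|V| = n`, `|X| = x`, `|Y| = y`. Removing the root set,
of size `k` say, leaves a parent map on the other `n - k` vertices whose roots are labelled by a
former parent and an edge label, i.e. by `k * x` labels (`card_labelledMap_eq_sigma`). Hence
`N(n, x, y) = ∑ k, n.choose k * y ^ k * N(n - k, x, k * x)`. By induction
`N(n - k, x, k * x) = (n * x) ^ (n - k - 1) * (k * x)` for `k < n`, and
`k * n.choose k = n * (n - 1).choose (k - 1)` turns the sum into the binomial expansion of
`(n * x + y) ^ (n - 1) * y` (`card_labelledMap`).
-/

/-- A rooted forest on `[m]`: an acyclic simple graph on `Fin m` together with a chosen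
set of roots containing exactly one vertex from each connected component. -/
structure RootedForest (m : ℕ) where
  graph : SimpleGraph (Fin m)
  acyclic : graph.IsAcyclic
  roots : Set (Fin m)
  existsUnique_root : ∀ v : Fin m, ∃! r, r ∈ roots ∧ graph.Reachable r v

/-! ### Parent maps and rooted forests -/

/-- `Rooted p v`: starting from `v` and following the parent map `p`, a vertex without a
parent is eventually reached. -/
inductive Rooted {V : Type} (p : V → Option V) : V → Prop
  | root {v : V} : p v = none → Rooted p v
  | step {v w : V} : p v = some w → Rooted p w → Rooted p v

/-- The relation "`w` is the parent of `v`" has no cycle through a rooted vertex. -/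
lemma Rooted.not_transGen {V : Type} {p : V → Option V} {v : V} (h : Rooted p v) :
    ¬ Relation.TransGen (fun a b => p a = some b) v v := by
  induction h with
  | root h =>
    intro c
    obtain ⟨b, hb, -⟩ := Relation.TransGen.head'_iff.1 c
    simp [h] at hb
  | @step v w h _ ih =>
    intro c
    obtain ⟨b, hb, hbv⟩ := Relation.TransGen.head'_iff.1 c
    obtain rfl : w = b := by simpa [h] using hb
    exact ih (Relation.TransGen.tail' hbv h)

/-- The graph joining every vertex to its parent. -/
def parentGraph {V : Type} (p : V → Option V) : SimpleGraph V :=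
  SimpleGraph.fromRel (fun a b => p a = some b)

lemma Rooted.ne {V : Type} {p : V → Option V} {v w : V} (h : Rooted p v)
    (hw : p v = some w) : v ≠ w := by
  rintro rfl
  exact h.not_transGen (.single hw)

lemma parentGraph_adj {V : Type} {p : V → Option V} (hp : ∀ v, Rooted p v) {v w : V} :
    (parentGraph p).Adj v w ↔ p v = some w ∨ p w = some v := by
  rw [parentGraph, SimpleGraph.fromRel_adj]
  constructor
  · exact fun h => h.2
  · intro h
    refine ⟨?_, h⟩
    rcases h with h | h
    · exact (hp v).ne h
    · exact ((hp w).ne h).symm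

/-- Each edge joining `v` to its parent is a bridge: without it, the set of descendants of `v`
is closed under adjacency, and it does not contain the parent of `v`. -/
lemma parentGraph_isAcyclic {V : Type} {p : V → Option V} (hp : ∀ v, Rooted p v) :
    (parentGraph p).IsAcyclic := by
  have key : ∀ v w, p v = some w → (parentGraph p).IsBridge s(v, w) := by
    intro v w hvw
    rw [SimpleGraph.isBridge_iff]
    rintro ⟨walk⟩
    have desc : ∀ a b, ((parentGraph p).deleteEdges {s(v, w)}).Walk a b →
        Relation.ReflTransGen (fun a b => p a = some b) a v →
        Relation.ReflTransGen (fun a b => p a = some b) b v := by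
      intro a b q
      induction q with
      | nil => exact id
      | @cons a c b hac _ ih =>
        intro ha
        apply ih
        rw [SimpleGraph.deleteEdges_adj, parentGraph_adj hp] at hac
        obtain ⟨h | h, hne⟩ := hac
        · rcases Relation.ReflTransGen.cases_head ha with rfl | ⟨d, hd, hdv⟩
          · obtain rfl : w = c := by simpa [hvw] using h
            simp at hne
          · obtain rfl : c = d := by simpa [h] using hd
            exact hdv
        · exact .head h ha
    exact (hp v).not_transGen (.head' hvw (desc v w walk .refl))
  rw [SimpleGraph.isAcyclic_iff_forall_adj_isBridge]
  intro v w h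
  rcases (parentGraph_adj hp).1 h with h | h
  · exact key v w h
  · rw [Sym2.eq_swap]
    exact key w v h

lemma exists_root_reachable {V : Type} {p : V → Option V} (hp : ∀ v, Rooted p v) (v : V) :
    ∃ r, p r = none ∧ (parentGraph p).Reachable r v := by
  induction hp v with
  | @root v h => exact ⟨v, h, .refl v⟩
  | step h _ ih =>
    obtain ⟨r, hr, hrw⟩ := ih
    exact ⟨r, hr, hrw.trans ((parentGraph_adj hp).2 (.inr h)).reachable⟩

/-- A component contains at most one vertex without a parent: the descendants of such a vertex
form a set closed under adjacency. -/
lemma eq_of_reachable_roots {V : Type} {p : V → Option V} (hp : ∀ v, Rooted p v) {r s : V}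
    (hr : p r = none) (hs : p s = none) (h : (parentGraph p).Reachable r s) : r = s := by
  obtain ⟨walk⟩ := h
  have desc : ∀ a b, (parentGraph p).Walk a b →
      Relation.ReflTransGen (fun a b => p a = some b) a r →
      Relation.ReflTransGen (fun a b => p a = some b) b r := by
    intro a b q
    induction q with
    | nil => exact id
    | @cons a c b hac _ ih =>
      intro ha
      apply ih
      rcases (parentGraph_adj hp).1 hac with h | h
      · rcases Relation.ReflTransGen.cases_head ha with rfl | ⟨d, hd, hdv⟩
        · simp [hr] at h
        · obtain rfl : c = d := by simpa [h] using hd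
          exact hdv
      · exact .head h ha
  rcases Relation.ReflTransGen.cases_head (desc r s walk .refl) with h | ⟨d, hd, -⟩
  · exact h.symm
  · simp [hs] at hd

/-- The rooted forest of a parent map all of whose vertices are rooted. -/
def toForest {m : ℕ} (p : Fin m → Option (Fin m)) (hp : ∀ v, Rooted p v) : RootedForest m where
  graph := parentGraph p
  acyclic := parentGraph_isAcyclic hp
  roots := {v | p v = none}
  existsUnique_root v := by
    obtain ⟨r, hr, hrv⟩ := exists_root_reachable hp v
    refine ⟨r, ⟨hr, hrv⟩, ?_⟩
    rintro s ⟨hs, hsv⟩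
    exact eq_of_reachable_roots hp hs hr (hsv.trans hrv.symm)

/-- A parent map is determined by its graph and its roots. -/
lemma parent_unique {V : Type} {p q : V → Option V} (hp : ∀ v, Rooted p v)
    (hq : ∀ v, Rooted q v) (hG : parentGraph p = parentGraph q)
    (hR : ∀ v, p v = none ↔ q v = none) : p = q := by
  funext v
  induction hp v with
  | @root v h => rw [h, (hR v).1 h]
  | @step v w h _ ih =>
    have hadj : (parentGraph q).Adj v w := hG ▸ (parentGraph_adj hp).2 (.inl h)
    rcases (parentGraph_adj hq).1 hadj with hfwd | hback
    · rw [h, hfwd]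
    · rw [← ih] at hback
      -- here `v` and `w` would be parents of each other under `p`
      exact absurd (.head h (.single hback)) (hp v).not_transGen

/-- Every rooted forest comes from a parent map: the parent of a non-root is a neighbour
closer to its root. The resulting graph is all of `F.graph`, because
the ends of an edge outside it would still be joined through their common root. -/
lemma exists_toForest_eq {m : ℕ} (F : RootedForest m) :
    ∃ p, ∃ hp : ∀ v, Rooted p v, toForest p hp = F := by
  classical
  choose root hroot huniq using F.existsUnique_root
  have root_congr : ∀ {v w}, F.graph.Adj v w → root w = root v := fun {v w} h =>
    huniq v _ ⟨(hroot w).1, (hroot w).2.trans h.symm.reachable⟩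
  have hcloser : ∀ v r, v ≠ r → F.graph.Reachable v r → ∃ w, F.graph.Adj v w ∧
      F.graph.dist w r < F.graph.dist v r := by
    intro v r hne hvr
    obtain ⟨q, hq⟩ := hvr.exists_walk_length_eq_dist
    cases q with
    | nil => exact absurd rfl hne
    | @cons _ w _ h q =>
      refine ⟨w, h, ?_⟩
      rw [SimpleGraph.Walk.length_cons] at hq
      have := SimpleGraph.dist_le q
      omega
  have hnext : ∀ v, v ∉ F.roots → ∃ w, F.graph.Adj v w ∧
      F.graph.dist w (root v) < F.graph.dist v (root v) := fun v hv =>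
    hcloser v (root v) (fun h => hv (h ▸ (hroot v).1)) (hroot v).2.symm
  choose! next hadj hdist using hnext
  let p : Fin m → Option (Fin m) := fun v => if v ∈ F.roots then none else some (next v)
  have hp : ∀ v, Rooted p v := by
    intro v
    induction hn : F.graph.dist v (root v) using Nat.strong_induction_on generalizing v with
    | _ n ih =>
      by_cases hv : v ∈ F.roots
      · exact .root (if_pos hv)
      · refine .step (if_neg hv) (ih _ ?_ _ rfl)
        rw [root_congr (hadj v hv), ← hn]
        exact hdist v hv
  have hnone : ∀ v, p v = none ↔ v ∈ F.roots := by
    intro v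
    by_cases hv : v ∈ F.roots <;> simp [p, hv]
  have hsome : ∀ v w, p v = some w → F.graph.Adj v w := by
    intro v w h
    by_cases hv : v ∈ F.roots
    · simp [p, hv] at h
    · obtain rfl : next v = w := by simpa [p, hv] using h
      exact hadj v hv
  have hle : parentGraph p ≤ F.graph := by
    intro v w h
    rcases (parentGraph_adj hp).1 h with h | h
    · exact hsome v w h
    · exact (hsome w v h).symm
  have hge : F.graph ≤ parentGraph p := by
    intro v w h
    by_contra hn
    have hbridge := SimpleGraph.isAcyclic_iff_forall_adj_isBridge.1 F.acyclic h
    rw [SimpleGraph.isBridge_iff] at hbridge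
    apply hbridge
    obtain ⟨r, hr, hrv⟩ := exists_root_reachable hp v
    obtain ⟨s, hs, hsw⟩ := exists_root_reachable hp w
    have hrs : r = s := by
      rw [huniq v r ⟨(hnone r).1 hr, hrv.mono hle⟩, huniq w s ⟨(hnone s).1 hs, hsw.mono hle⟩,
        root_congr h]
    subst hrs
    refine (hrv.symm.trans hsw).mono ?_
    intro a b hab
    rw [SimpleGraph.deleteEdges_adj]
    refine ⟨hle hab, ?_⟩
    intro he
    rw [Set.mem_singleton_iff, ← SimpleGraph.mem_edgeSet] at *
    exact hn (he ▸ (SimpleGraph.mem_edgeSet _).2 hab)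
  refine ⟨p, hp, ?_⟩
  have hG : parentGraph p = F.graph := le_antisymm hle hge
  have hR : {v | p v = none} = F.roots := Set.ext hnone
  cases F
  simp only [toForest, RootedForest.mk.injEq]
  exact ⟨hG, hR⟩

/-! ### Labelled parent maps -/

/-- The parent recorded by a labelled value: `inl (w, c)` is a parent `w` with label `c` for the
non-root, `inr y` is the label `y` of a root. -/
def parentOf {V X Y : Type} : (V × X) ⊕ Y → Option V
  | .inl (w, _) => some w
  | .inr _ => none

/-- Labelled parent maps on `V` all of whose vertices are rooted, non-roots being labelled by `X`
and roots by `Y`. -/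
abbrev LabelledMap (V X Y : Type) : Type :=
  {p : V → (V × X) ⊕ Y // ∀ v, Rooted (parentOf ∘ p) v}

open Classical in
/-- Labelled rooted forests correspond to labelled parent maps. -/
lemma card_forest_eq (m : ℕ) (X Y : Type) :
    Nat.card ((F : RootedForest m) ×
        ({v : Fin m // v ∉ F.roots} → X) × ({v : Fin m // v ∈ F.roots} → Y)) =
      Nat.card (LabelledMap (Fin m) X Y) := by
  choose par hpar hF using @exists_toForest_eq m
  have hroots : ∀ F v, par F v = none ↔ v ∈ F.roots := by
    intro F v
    conv_rhs => rw [← hF F]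
    rfl
  have hinj : ∀ F G, par F = par G → F = G := by
    intro F G h
    rw [← hF F, ← hF G]
    congr
  let build : ((F : RootedForest m) ×
        ({v : Fin m // v ∉ F.roots} → X) × ({v : Fin m // v ∈ F.roots} → Y)) →
      Fin m → (Fin m × X) ⊕ Y := fun T v =>
    if h : v ∈ T.1.roots then .inr (T.2.2 ⟨v, h⟩)
    else .inl ((par T.1 v).get (Option.isSome_iff_ne_none.2 fun h' => h ((hroots _ _).1 h')),
      T.2.1 ⟨v, h⟩)
  have hbuild : ∀ T, parentOf ∘ build T = par T.1 := by
    intro T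
    funext v
    by_cases h : v ∈ T.1.roots
    · simp [build, h, parentOf, (hroots _ _).2 h]
    · simp [build, h, parentOf]
  refine Nat.card_congr (Equiv.ofBijective
    (fun T => ⟨build T, by rw [hbuild]; exact hpar T.1⟩) ⟨?_, ?_⟩)
  · intro T T' h
    have h : build T = build T' := congrArg Subtype.val h
    have hFF : T.1 = T'.1 := hinj _ _ (by rw [← hbuild, ← hbuild, h])
    obtain ⟨F, f, g⟩ := T
    obtain ⟨F', f', g'⟩ := T'
    obtain rfl : F = F' := hFF
    have hf : f = f' := by
      funext ⟨v, hv⟩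
      have := congrFun h v
      simpa [build, hv] using this
    have hg : g = g' := by
      funext ⟨v, hv⟩
      have := congrFun h v
      simpa [build, hv] using this
    rw [hf, hg]
  · rintro ⟨p, hp⟩
    let F := toForest (parentOf ∘ p) hp
    have hpF : par F = parentOf ∘ p := by
      have h := hF F
      refine parent_unique (hpar F) hp (congrArg RootedForest.graph h) fun v => ?_
      rw [hroots]
      rfl
    have hl : ∀ v : {v // v ∉ F.roots}, ∃ w c, p v = .inl (w, c) := by
      rintro ⟨v, hv⟩
      rcases hpv : p v with ⟨w, c⟩ | b
      · exact ⟨w, c, rfl⟩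
      · exact absurd (show parentOf (p v) = none by rw [hpv]; rfl) hv
    have hr : ∀ v : {v // v ∈ F.roots}, ∃ b, p v = .inr b := by
      rintro ⟨v, hv⟩
      replace hv : parentOf (p v) = none := hv
      rcases hpv : p v with ⟨w, c⟩ | b
      · rw [hpv] at hv
        simp [parentOf] at hv
      · exact ⟨b, rfl⟩
    choose w f hf using hl
    choose g hg using hr
    refine ⟨⟨F, f, g⟩, Subtype.ext (funext fun v => ?_)⟩
    by_cases hv : v ∈ F.roots
    · simp [build, hv, hg ⟨v, hv⟩]
    · simp [build, hv, hf ⟨v, hv⟩, hpF, parentOf]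

/-! ### Counting labelled parent maps -/

/-- Glue root labels on `S` and a labelled parent map on the complement of `S`, whose own roots
are labelled by a parent in `S` and an edge label. -/
def glue {V X Y : Type} (S : Set V) [DecidablePred (· ∈ S)] (f : S → Y)
    (q : (Sᶜ : Set V) → ((Sᶜ : Set V) × X) ⊕ (S × X)) (v : V) : (V × X) ⊕ Y :=
  if h : v ∈ S then .inr (f ⟨v, h⟩)
  else .inl (Sum.elim (fun a => (a.1.1, a.2)) (fun a => (a.1.1, a.2)) (q ⟨v, h⟩))

open Classical in
lemma glue_rooted_iff {V X Y : Type} (S : Set V) (f : S → Y)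
    (q : (Sᶜ : Set V) → ((Sᶜ : Set V) × X) ⊕ (S × X)) :
    (∀ v, Rooted (parentOf ∘ glue S f q) v) ↔ ∀ v, Rooted (parentOf ∘ q) v := by
  have hS : ∀ v ∈ S, Rooted (parentOf ∘ glue S f q) v := by
    intro v hv
    exact .root (by simp [glue, hv, parentOf])
  constructor
  · intro h
    suffices H : ∀ v, Rooted (parentOf ∘ glue S f q) v →
        ∀ hv : v ∈ Sᶜ, Rooted (parentOf ∘ q) ⟨v, hv⟩ from fun v => H v (h v) v.2
    intro v h
    induction h with
    | @root v h =>
      intro hv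
      have hv' : v ∉ S := hv
      simp [glue, hv', parentOf] at h
    | @step v w h _ ih =>
      intro hv
      have hv' : v ∉ S := hv
      rcases hq : q ⟨v, hv⟩ with ⟨u, c⟩ | ⟨u, c⟩
      · obtain rfl : u.1 = w := by simpa [glue, hv', parentOf, hq] using h
        exact .step (w := u) (by simp [hq, parentOf]) (ih u.2)
      · exact .root (by simp [hq, parentOf])
  · intro h v
    by_cases hv : v ∈ S
    · exact hS v hv
    suffices H : ∀ u : (Sᶜ : Set V), Rooted (parentOf ∘ q) u →
        Rooted (parentOf ∘ glue S f q) u.1 from H ⟨v, hv⟩ (h _)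
    intro u hu
    induction hu with
    | @root u h =>
      have hu : u.1 ∉ S := u.2
      rcases hq : q u with ⟨w, c⟩ | ⟨w, c⟩
      · simp [hq, parentOf] at h
      · exact .step (w := w.1) (by simp [glue, hu, hq, parentOf]) (hS _ w.2)
    | @step u w h _ ih =>
      have hu : u.1 ∉ S := u.2
      rcases hq : q u with ⟨w', c⟩ | ⟨w', c⟩
      · obtain rfl : w' = w := by simpa [hq, parentOf] using h
        exact .step (by simp [glue, hu, hq, parentOf]) ih
      · simp [hq, parentOf] at h

open Classical in
/-- Removing the set `S` of roots leaves a labelled parent map on the complement, whose roots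
remember their former parent in `S` together with the former edge label. -/
lemma card_labelledMap_eq_sigma (V X Y : Type) :
    Nat.card (LabelledMap V X Y) =
      Nat.card ((S : Set V) × (S → Y) × LabelledMap (Sᶜ : Set V) X (S × X)) := by
  symm
  refine Nat.card_congr (Equiv.ofBijective
    (fun T => ⟨glue T.1 T.2.1 T.2.2.1, (glue_rooted_iff _ _ _).2 T.2.2.2⟩) ⟨?_, ?_⟩)
  · rintro ⟨S, f, q, hq⟩ ⟨S', f', q', hq'⟩ h
    have h : glue S f q = glue S' f' q' := congrArg Subtype.val h
    obtain rfl : S = S' := by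
      ext v
      have := congrFun h v
      by_cases hv : v ∈ S <;> by_cases hv' : v ∈ S' <;> simp [glue, hv, hv'] at this ⊢
    have hf : f = f' := by
      funext ⟨v, hv⟩
      have := congrFun h v
      simpa [glue, hv] using this
    have hqq : q = q' := by
      funext ⟨v, hv⟩
      have hv' : v ∉ S := hv
      have := congrFun h v
      rcases h1 : q ⟨v, hv⟩ with ⟨⟨w, hw⟩, c⟩ | ⟨⟨w, hw⟩, c⟩ <;>
      rcases h2 : q' ⟨v, hv⟩ with ⟨⟨w', hw'⟩, c'⟩ | ⟨⟨w', hw'⟩, c'⟩ <;>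
      simp [glue, hv', h1, h2] at this ⊢
      · exact this
      · exact hw (this.1 ▸ hw')
      · exact hw' (this.1 ▸ hw)
      · exact this
    subst hf hqq
    rfl
  · rintro ⟨p, hp⟩
    let S : Set V := {v | ∃ b, p v = .inr b}
    have hr : ∀ v : S, ∃ b, p v = .inr b := fun v => v.2
    have hl : ∀ v : (Sᶜ : Set V), ∃ a, p v = .inl a := by
      rintro ⟨v, hv⟩
      rcases hpv : p v with a | b
      · exact ⟨a, rfl⟩
      · exact absurd ⟨b, hpv⟩ hv
    choose f hf using hr
    choose a ha using hl
    let q : (Sᶜ : Set V) → ((Sᶜ : Set V) × X) ⊕ (S × X) := fun v =>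
      if h : (a v).1 ∈ S then .inr (⟨_, h⟩, (a v).2) else .inl (⟨_, h⟩, (a v).2)
    have hglue : glue S f q = p := by
      funext v
      by_cases hv : v ∈ S
      · simp only [glue, hv, dif_pos]
        exact (hf ⟨v, hv⟩).symm
      · simp only [glue, hv, dif_neg, not_false_eq_true]
        rw [ha ⟨v, hv⟩]
        by_cases h : (a ⟨v, hv⟩).1 ∈ S <;> simp [q, h]
    exact ⟨⟨S, f, q, (glue_rooted_iff _ _ _).1 (hglue ▸ hp)⟩, Subtype.ext hglue⟩

/-- The number of labelled parent maps. For `n = |V| ≥ 1`, the maps with root set of size `k`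
number `y ^ k * (n * x) ^ (n - k - 1) * (k * x)` by induction, and
`k * n.choose k = n * (n - 1).choose (k - 1)` turns the sum over `k` into a binomial expansion. -/
lemma card_labelledMap (X : Type) [Finite X] (n : ℕ) : ∀ (V Y : Type) [Finite V] [Finite Y],
    Nat.card V = n + 1 → Nat.card (LabelledMap V X Y) =
      ((n + 1) * Nat.card X + Nat.card Y) ^ n * Nat.card Y := by
  induction n using Nat.strong_induction_on with
  | _ n ih =>
  intro V Y _ _ hV
  classical
  have := Fintype.ofFinite V
  have := Fintype.ofFinite X
  have := Fintype.ofFinite Y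
  set x := Nat.card X with hx
  set y := Nat.card Y with hy
  let term : ℕ → ℕ := fun k =>
    y ^ k * if k = n + 1 then 1 else ((n + 1) * x) ^ (n - k) * (k * x)
  have hterm : ∀ S : Finset V,
      Nat.card ((↥(S : Set V) → Y) × LabelledMap ↥((S : Set V)ᶜ) X (↥(S : Set V) × X)) =
        term S.card := by
    intro S
    have hSn : S.card ≤ n + 1 := by
      rw [← hV, Nat.card_eq_fintype_card]
      exact S.card_le_univ
    have hScard : Nat.card (S : Set V) = S.card := by simp
    have hcompl : Nat.card ((S : Set V)ᶜ : Set V) = n + 1 - S.card := by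
      rw [← hV, ← hScard, Nat.card_coe_set_eq, Nat.card_coe_set_eq, Set.ncard_compl]
    rw [Nat.card_prod, Nat.card_fun, hScard]
    simp only [term]
    congr 1
    split_ifs with hk
    · have : IsEmpty ((S : Set V)ᶜ : Set V) := by
        rw [← Finite.card_eq_zero_iff, hcompl, hk, Nat.sub_self]
      rw [Nat.card_eq_one_iff_unique]
      exact ⟨inferInstance, ⟨⟨isEmptyElim, isEmptyElim⟩⟩⟩
    · rcases Nat.eq_zero_or_pos S.card with h0 | hpos
      · have hS : S = ∅ := Finset.card_eq_zero.1 h0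
        -- a labelled parent map on a nonempty type needs a root label
        rw [h0, zero_mul, mul_zero, Finite.card_eq_zero_iff]
        refine ⟨fun ⟨q, hq⟩ => ?_⟩
        obtain ⟨v⟩ : Nonempty V := (Nat.card_pos_iff.1 (by omega)).1
        have hnone : ∀ u, Rooted (parentOf ∘ q) u → False := by
          intro u hu
          induction hu with
          | @root u h =>
            rcases hqu : q u with ⟨w, c⟩ | ⟨w, c⟩
            · simp [hqu, parentOf] at h
            · have := w.2
              simp [hS] at this
          | step _ _ ih => exact ih
        exact hnone ⟨v, by simp [hS]⟩ (hq _)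
      · obtain ⟨j, hj⟩ : ∃ j, n = S.card + j := ⟨n - S.card, by omega⟩
        rw [ih j (by omega) _ _ (by rw [hcompl]; omega), Nat.card_prod, hScard, ← hx]
        have e1 : n - S.card = j := by omega
        have e2 : (j + 1) * x + S.card * x = (n + 1) * x := by rw [hj]; ring
        rw [e1, e2]
  have hsum : Nat.card (LabelledMap V X Y) = ∑ S : Finset V, term S.card := by
    rw [card_labelledMap_eq_sigma, Nat.card_sigma]
    rw [← (Equiv.sum_comp (Fintype.finsetEquivSet (α := V)) _)]
    refine Finset.sum_congr rfl fun S _ => ?_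
    exact hterm S
  rw [hsum, ← Finset.powerset_univ, Finset.sum_powerset_apply_card, Finset.card_univ,
    ← Nat.card_eq_fintype_card, hV, Finset.sum_range_succ', add_comm ((n + 1) * x) y, add_pow,
    Finset.sum_mul]
  have h0 : (n + 1).choose 0 • term 0 = 0 := by simp [term]
  rw [h0, add_zero]
  refine Finset.sum_congr rfl fun k hk => ?_
  have hkn : k ≤ n := by simpa [Nat.lt_succ_iff] using hk
  simp only [term, smul_eq_mul]
  split_ifs with hk'
  · obtain rfl : k = n := by omega
    simp [pow_succ]
  · obtain ⟨j, rfl⟩ : ∃ j, n = k + j + 1 := ⟨n - k - 1, by omega⟩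
    have e1 : k + j + 1 - (k + 1) = j := by omega
    have e2 : k + j + 1 - k = j + 1 := by omega
    rw [e1, e2]
    have hc := Nat.add_one_mul_choose_eq (k + j + 1) k
    calc _ = ((k + j + 1 + 1).choose (k + 1) * (k + 1)) *
          (y ^ (k + 1) * ((k + j + 1 + 1) * x) ^ j * x) := by ring
      _ = _ := by rw [← hc, Nat.cast_id]; ring

/-- The number of rooted forests on `[m]` with a label in `{1,…,x}` on each non-root
vertex and a label in `{1,…,y}` on each root equals `(m·x + y)^{m−1} · y`. -/
theorem labeled_forest_count (m x y : ℕ) (hm : 1 ≤ m) :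
    Nat.card ((F : RootedForest m) ×
        ({v : Fin m // v ∉ F.roots} → Fin x) × ({v : Fin m // v ∈ F.roots} → Fin y)) =
      (m * x + y) ^ (m - 1) * y := by
  obtain ⟨n, rfl⟩ : ∃ n, m = n + 1 := ⟨m - 1, by omega⟩
  rw [card_forest_eq, card_labelledMap (Fin x) n (Fin (n + 1)) (Fin y) (by simp)]
  simp
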